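/- (Single Fault) Consider the robot model on a line with a single faulty robot: fix an integer n ≥ 1 and a visibility radius V > 0, let x : ℕ → Fin (n+1) → ℝ give the position x t i of robot i at time t, where robot 0 is faulty and fixed (x t 0 = 0 for all t) and every other robot i obeys the synchronous update rule x (t+1) i = (l(i,t) + r(i,t))/2, with l(i,t) and r(i,t) the minimum and maximum positions of the robots within distance V of robot i at time t. If the visibility graph at time 0 (edges between robots at distance at most V) is connected, then x t i → 0 as t → ∞ for every robot i; i.e., all robots converge toward the single faulty robot. -/

import Mathlib

open Filter Topology

/-- Position of the farthest left robot visible from robot `i` at time `t`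
(visibility radius `V`). -/
noncomputable def lpos {n : ℕ} (V : ℝ) (x : ℕ → Fin (n + 1) → ℝ)
    (t : ℕ) (i : Fin (n + 1)) : ℝ :=
  sInf (x t '' {j | |x t j - x t i| ≤ V})

/-- Position of the farthest right robot visible from robot `i` at time `t`
(visibility radius `V`). -/
noncomputable def rpos {n : ℕ} (V : ℝ) (x : ℕ → Fin (n + 1) → ℝ)
    (t : ℕ) (i : Fin (n + 1)) : ℝ :=
  sSup (x t '' {j | |x t j - x t i| ≤ V})

theorem lpos_le' {n : ℕ} (V : ℝ) (x : ℕ → Fin (n + 1) → ℝ) (t : ℕ) (i j : Fin (n + 1))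
    (h : |x t j - x t i| ≤ V) : lpos V x t i ≤ x t j :=
  csInf_le (Set.toFinite _).bddBelow ⟨j, h, rfl⟩

theorem le_rpos' {n : ℕ} (V : ℝ) (x : ℕ → Fin (n + 1) → ℝ) (t : ℕ) (i j : Fin (n + 1))
    (h : |x t j - x t i| ≤ V) : x t j ≤ rpos V x t i :=
  le_csSup (Set.toFinite _).bddAbove ⟨j, h, rfl⟩

theorem le_lpos' {n : ℕ} (V : ℝ) (hV : 0 < V) (x : ℕ → Fin (n + 1) → ℝ) (t : ℕ)
    (i : Fin (n + 1)) (a : ℝ) (h : ∀ j, |x t j - x t i| ≤ V → a ≤ x t j) :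
    a ≤ lpos V x t i := by
  apply le_csInf
  · exact ⟨x t i, i, by simp [hV.le], rfl⟩
  · rintro _ ⟨j, hj, rfl⟩
    exact h j hj

theorem rpos_le' {n : ℕ} (V : ℝ) (hV : 0 < V) (x : ℕ → Fin (n + 1) → ℝ) (t : ℕ)
    (i : Fin (n + 1)) (a : ℝ) (h : ∀ j, |x t j - x t i| ≤ V → x t j ≤ a) :
    rpos V x t i ≤ a := by
  apply csSup_le
  · exact ⟨x t i, i, by simp [hV.le], rfl⟩
  · rintro _ ⟨j, hj, rfl⟩
    exact h j hj

/-- (Single Fault) With a single faulty robot fixed at `0`, all robots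
converge toward it. -/
theorem single_fault_convergence
    (n : ℕ) (hn : 1 ≤ n) (V : ℝ) (hV : 0 < V)
    (x : ℕ → Fin (n + 1) → ℝ)
    (hfault0 : ∀ t : ℕ, x t 0 = 0)
    (hupd : ∀ t : ℕ, ∀ i : Fin (n + 1), i ≠ 0 →
      x (t + 1) i = (lpos V x t i + rpos V x t i) / 2)
    (hconn : ∀ i j : Fin (n + 1),
      Relation.ReflTransGen (fun a b : Fin (n + 1) => |x 0 a - x 0 b| ≤ V) i j) :
    ∀ i : Fin (n + 1), Tendsto (fun t => x t i) atTop (nhds 0) := by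
  have hl : ∀ t i, x t i - V ≤ lpos V x t i := fun t i =>
    le_lpos' V hV x t i _ fun j hj => by linarith [(abs_le.1 hj).1]
  have hr : ∀ t i, rpos V x t i ≤ x t i + V := fun t i =>
    rpos_le' V hV x t i _ fun j hj => by linarith [(abs_le.1 hj).2]
  -- edges persist
  have hzero : ∀ t b, |x t 0 - x t b| ≤ V → |x (t+1) 0 - x (t+1) b| ≤ V := by
    intro t b h
    by_cases hb : b = 0
    · subst hb; simp [hV.le]
    have h1 := lpos_le' V x t b 0 h
    have h2 := le_rpos' V x t b 0 h
    have h3 := hl t b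
    have h4 := hr t b
    rw [hfault0] at h h1 h2
    rw [hfault0, hupd t b hb]
    rw [abs_le] at *
    constructor <;> linarith [h.1, h.2]
  have hstep : ∀ t a b, |x t a - x t b| ≤ V → |x (t+1) a - x (t+1) b| ≤ V := by
    intro t a b h
    by_cases ha : a = 0
    · subst ha; exact hzero t b h
    have h' : |x t b - x t a| ≤ V := by rwa [abs_sub_comm]
    by_cases hb : b = 0
    · subst hb; rw [abs_sub_comm]; exact hzero t a h'
    have h1 := lpos_le' V x t b a h
    have h2 := le_rpos' V x t b a h
    have h3 := lpos_le' V x t a b h'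
    have h4 := le_rpos' V x t a b h'
    have h5 := hl t a
    have h6 := hr t a
    have h7 := hl t b
    have h8 := hr t b
    rw [hupd t a ha, hupd t b hb, abs_le]
    constructor <;> linarith
  have hpers : ∀ a b, |x 0 a - x 0 b| ≤ V → ∀ t, |x t a - x t b| ≤ V := by
    intro a b h t
    induction t with
    | zero => exact h
    | succ t ih => exact hstep t a b ih
  -- contraction along paths
  have hpath : ∀ i, ∃ d : ℕ, ∃ c : ℝ, 0 ≤ c ∧ c < 1 ∧ ∀ (T : ℕ) (M : ℝ), 0 ≤ M →
      (∀ t, T ≤ t → ∀ j, |x t j| ≤ M) → ∀ t, T + d ≤ t → |x t i| ≤ c * M := by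
    intro i
    induction hconn 0 i with
    | refl => exact ⟨0, 0, le_rfl, one_pos, fun T M _ _ t _ => by simp [hfault0]⟩
    | @tail j k _ hjk ih =>
      obtain ⟨d, c, hc0, hc1, hd⟩ := ih
      refine ⟨d + 1, (1 + c) / 2, by linarith, by linarith, fun T M hM hb t ht => ?_⟩
      by_cases hk : k = 0
      · subst hk; rw [hfault0, abs_zero]; positivity
      obtain ⟨s, rfl⟩ : ∃ s, t = s + 1 := ⟨t - 1, by omega⟩
      have hj := abs_le.1 (hd T M hM hb s (by omega))
      have he := hpers j k hjk s
      have h1 := lpos_le' V x s k j he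
      have h2 := le_rpos' V x s k j he
      have h3 : -M ≤ lpos V x s k := le_lpos' V hV x s k _ fun m _ =>
        (abs_le.1 (hb s (by omega) m)).1
      have h4 : rpos V x s k ≤ M := rpos_le' V hV x s k _ fun m _ =>
        (abs_le.1 (hb s (by omega) m)).2
      rw [hupd s k hk, abs_le]
      constructor <;> linarith [hj.1, hj.2]
  choose d c hc0 hc1 hdc using hpath
  obtain ⟨m, hm⟩ := Finite.exists_max c
  obtain ⟨p, hp⟩ := Finite.exists_max d
  obtain ⟨q, hq⟩ := Finite.exists_max (fun j => |x 0 j|)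
  have hbd : ∀ t j, |x t j| ≤ |x 0 q| := by
    intro t
    induction t with
    | zero => exact hq
    | succ t ih =>
      intro k
      by_cases hk : k = 0
      · subst hk; rw [hfault0, abs_zero]; positivity
      have h3 : -|x 0 q| ≤ lpos V x t k := le_lpos' V hV x t k _ fun m _ =>
        (abs_le.1 (ih m)).1
      have h4 : rpos V x t k ≤ |x 0 q| := rpos_le' V hV x t k _ fun m _ =>
        (abs_le.1 (ih m)).2
      have h0 : |x t k - x t k| ≤ V := by simp [hV.le]
      have h1 := lpos_le' V x t k k h0
      have h2 := le_rpos' V x t k k h0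
      rw [hupd t k hk, abs_le]
      constructor <;> linarith
  have hgeo : ∀ k : ℕ, ∀ t, k * d p ≤ t → ∀ j, |x t j| ≤ c m ^ k * |x 0 q| := by
    intro k
    induction k with
    | zero => intro t _ j; simpa using hbd t j
    | succ k ih =>
      intro t ht j
      have hM : 0 ≤ c m ^ k * |x 0 q| := mul_nonneg (pow_nonneg (hc0 m) k) (abs_nonneg _)
      have hpj := hp j
      have := hdc j (k * d p) _ hM ih t (by rw [add_mul, one_mul] at ht; omega)
      calc |x t j| ≤ c j * (c m ^ k * |x 0 q|) := this
        _ ≤ c m * (c m ^ k * |x 0 q|) := mul_le_mul_of_nonneg_right (hm j) hM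
        _ = _ := by ring
  intro i
  have hlim : Tendsto (fun k : ℕ => c m ^ k * |x 0 q|) atTop (nhds 0) := by
    simpa using (tendsto_pow_atTop_nhds_zero_of_lt_one (hc0 m) (hc1 m)).mul_const (|x 0 q|)
  rw [Metric.tendsto_atTop]
  intro ε hε
  obtain ⟨k, hk⟩ := (hlim.eventually (gt_mem_nhds hε)).exists
  refine ⟨k * d p, fun t ht => ?_⟩
  rw [Real.dist_eq, sub_zero]
  exact lt_of_le_of_lt (hgeo k t ht i) hk
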